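/- Let X be a quantum-Wajsberg algebra and let x, y ∈ X with x ≤_Q y. Then, for every z ∈ X: (1) y = y∨x; (2) y* ≤_Q x*; (3) y→z ≤_Q x→z; (4) z→x ≤_Q z→y; (5) x∧z ≤_Q y∧z; (6) x∨z ≤_Q y∨z. -/

import Mathlib

/-!
Write `a* = neg a`. Since `x* → y* = y → x`, the relation `x ≤_Q y` says exactly
`x* = (y → x) → y*` (`leQ.neg_eq`), and then contraposition and exchange give
`x → z = (y → x) → (y → z)` for every `z` (`leQ.imp_eq`).

The axiom (QW) is used only through its instance `y = 0`, which reads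
`x* = x* ∧ (x → z)`, that is `x* ≤_Q x → z`; by contraposition, `v ≤_Q u → v` for all `u, v`
(`leQ_imp_self`). Combined with the identity above, this is antitonicity of `→` in its first
argument. Antitonicity of `*` comes from applying `y* ≤_Q y → x` to the formula for `x*`, and the
remaining monotonicity claims are compositions of these two.
-/

/-- A bounded involutive BE algebra. -/
class InvBE (X : Type*) where
  imp : X → X → X
  one : X
  zero : X
  be1 : ∀ x : X, imp x x = one
  be2 : ∀ x : X, imp x one = one
  be3 : ∀ x : X, imp one x = x
  be4 : ∀ x y z : X, imp x (imp y z) = imp y (imp x z)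
  bound : ∀ x : X, imp zero x = one
  dn : ∀ x : X, imp (imp x zero) zero = x

namespace InvBE

variable {X : Type*} [InvBE X]

/-- Negation: `x* = x → 0`. -/
def neg (x : X) : X := imp x zero

/-- `x ∨ y = (x → y) → y`. -/
def sup (x y : X) : X := imp (imp x y) y

/-- `x ∧ y = ((x* → y*) → y*)*`. -/
def inf (x y : X) : X := neg (imp (imp (neg x) (neg y)) (neg y))

/-- `x ≤ y` iff `x → y = 1`. -/
def le (x y : X) : Prop := imp x y = one

/-- `x ≤_Q y` iff `x = x ∧ y`. -/
def leQ (x y : X) : Prop := x = inf x y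

end InvBE

namespace InvBE

variable {X : Type*} [InvBE X]

lemma neg_neg_eq (x : X) : neg (neg x) = x := dn x

lemma imp_neg_comm (x y : X) : imp x (neg y) = imp y (neg x) := be4 x y zero

lemma neg_imp_neg (x y : X) : imp (neg x) (neg y) = imp y x := by
  rw [imp_neg_comm, neg_neg_eq]

lemma zero_inf (x : X) : inf zero x = zero := by
  have h : neg (zero : X) = one := be1 zero
  rw [inf, h, be3, be1]
  exact be3 zero

lemma inf_zero (x : X) : inf x zero = zero := by
  have h : neg (zero : X) = one := be1 zero
  rw [inf, h, be2]
  exact be3 zero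

lemma leQ.neg_eq {x y : X} (h : leQ x y) : neg x = imp (imp y x) (neg y) := by
  have hn := congrArg neg h
  rwa [inf, neg_neg_eq, neg_imp_neg] at hn

lemma leQ.imp_eq {x y : X} (h : leQ x y) (z : X) :
    imp x z = imp (imp y x) (imp y z) := by
  rw [← neg_imp_neg z x, h.neg_eq, be4, neg_imp_neg]

lemma leQ_neg_iff (x y : X) : leQ (neg y) (neg x) ↔ y = sup y x := by
  rw [leQ, inf, neg_neg_eq, neg_neg_eq, sup]
  refine ⟨fun h => ?_, fun h => congrArg neg h⟩
  have hn := congrArg neg h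
  rwa [neg_neg_eq, neg_neg_eq] at hn

/-- The instance `y = 0` of (QW). -/
lemma neg_leQ_imp
    (qw : ∀ x y z : X, imp x (inf (inf x y) (inf z x)) = inf (imp x y) (imp x z))
    (x z : X) : leQ (neg x) (imp x z) := by
  have h := qw x zero z
  rwa [inf_zero, zero_inf] at h

lemma leQ_imp_self
    (qw : ∀ x y z : X, imp x (inf (inf x y) (inf z x)) = inf (imp x y) (imp x z))
    (u v : X) : leQ v (imp u v) := by
  have h := neg_leQ_imp qw (neg v) (neg u)
  rwa [neg_neg_eq, neg_imp_neg] at h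

lemma leQ.neg_anti
    (qw : ∀ x y z : X, imp x (inf (inf x y) (inf z x)) = inf (imp x y) (imp x z))
    {x y : X} (h : leQ x y) : leQ (neg y) (neg x) := by
  rw [leQ_neg_iff]
  -- `y* ≤_Q y → x` gives `y = ((y → x) → y*) → (y → x)*`, whose premise is `x*`.
  have hn := (neg_leQ_imp qw y x).neg_eq
  rwa [neg_neg_eq, ← h.neg_eq, neg_imp_neg] at hn

lemma leQ.imp_anti
    (qw : ∀ x y z : X, imp x (inf (inf x y) (inf z x)) = inf (imp x y) (imp x z))
    {x y : X} (h : leQ x y) (z : X) : leQ (imp y z) (imp x z) := by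
  rw [h.imp_eq z]
  exact leQ_imp_self qw _ _

lemma leQ.imp_mono
    (qw : ∀ x y z : X, imp x (inf (inf x y) (inf z x)) = inf (imp x y) (imp x z))
    {x y : X} (h : leQ x y) (z : X) : leQ (imp z x) (imp z y) := by
  rw [← neg_imp_neg x z, ← neg_imp_neg y z]
  exact (h.neg_anti qw).imp_anti qw _

end InvBE

open InvBE in
theorem stmt_6 {X : Type*} [InvBE X]
    (qw : ∀ x y z : X, imp x (inf (inf x y) (inf z x)) = inf (imp x y) (imp x z))
    (x y : X) (hxy : leQ x y) :
    ∀ z : X,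
      y = sup y x ∧
      leQ (neg y) (neg x) ∧
      leQ (imp y z) (imp x z) ∧
      leQ (imp z x) (imp z y) ∧
      leQ (inf x z) (inf y z) ∧
      leQ (sup x z) (sup y z) := by
  intro z
  have hneg := hxy.neg_anti qw
  exact ⟨(leQ_neg_iff x y).1 hneg, hneg, hxy.imp_anti qw z, hxy.imp_mono qw z,
    ((hneg.imp_anti qw _).imp_anti qw _).neg_anti qw, (hxy.imp_anti qw z).imp_anti qw z⟩
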